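/- Let M ∈ ℕ₀ and 0 ≤ κ < 1, and let P be a point set in [0,1)² with N = 2^{M+κ} points. Then ‖D_P | L₂‖² ≥ (M+1)·Δ(κ), where Δ(κ) = 3^{-1}·2^{2κ-8} − 7^{-1}·2^{3κ-8} + (2−2^κ)·γ(κ) + (2^κ−1)·γ(κ−1). -/

import Mathlib

open MeasureTheory

noncomputable section

/-- The half-open unit square `[0,1) × [0,1)` in `ℝ × ℝ`. -/
def unitSq : Set (ℝ × ℝ) := Set.Ico (0:ℝ) 1 ×ˢ Set.Ico (0:ℝ) 1

/-- The discrepancy function of the point configuration `p`. -/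
def disc (N : ℕ) (p : Fin N → ℝ × ℝ) (x : ℝ × ℝ) : ℝ :=
  (∑ i : Fin N, if 0 ≤ (p i).1 ∧ (p i).1 < x.1 ∧ 0 ≤ (p i).2 ∧ (p i).2 < x.2
    then (1:ℝ) else 0) - N * x.1 * x.2

/-- The `L₂`-discrepancy `‖D_P | L₂‖ = (∫_{[0,1)²} D_P(x)² dx)^{1/2}`. -/
def L2disc (N : ℕ) (p : Fin N → ℝ × ℝ) : ℝ :=
  Real.sqrt (∫ x in unitSq, disc N p x ^ 2)

/-- `g_κ(α,β) = (αβ − 2^{κ-2})² + (α(1−β) − 2^{κ-4})² + ((1−α)β − 2^{κ-4})²`. -/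
def gk (κ α β : ℝ) : ℝ :=
  (α * β - (2:ℝ) ^ (κ - 2)) ^ 2 + (α * (1 - β) - (2:ℝ) ^ (κ - 4)) ^ 2 +
    ((1 - α) * β - (2:ℝ) ^ (κ - 4)) ^ 2

/-- `h(κ) = inf { g_κ(α,β) : 1/2 ≤ α < 1, 1/2 ≤ β < 1 }`. -/
def hfun (κ : ℝ) : ℝ :=
  sInf { t : ℝ | ∃ α β : ℝ, 1/2 ≤ α ∧ α < 1 ∧ 1/2 ≤ β ∧ β < 1 ∧ t = gk κ α β }

/-- `γ(κ) = min(9·2^{2κ-13}, 2^{-4}·h(κ))`. -/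
def gam (κ : ℝ) : ℝ := min (9 * (2:ℝ) ^ (2 * κ - 13)) ((2:ℝ) ^ (-4 : ℝ) * hfun κ)

/-- `Δ(κ) = 3^{-1}·2^{2κ-8} − 7^{-1}·2^{3κ-8} + (2−2^κ)·γ(κ) + (2^κ−1)·γ(κ−1)`. -/
def Delta (κ : ℝ) : ℝ :=
  3⁻¹ * (2:ℝ) ^ (2 * κ - 8) - 7⁻¹ * (2:ℝ) ^ (3 * κ - 8) +
    (2 - (2:ℝ) ^ κ) * gam κ + ((2:ℝ) ^ κ - 1) * gam (κ - 1)

/-- dyadic interval -/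
def dyI (j m : ℕ) : Set ℝ := Set.Ico ((m:ℝ) / 2 ^ j) (((m:ℝ) + 1) / 2 ^ j)

lemma mem_dyI {j m : ℕ} {x : ℝ} : x ∈ dyI j m ↔ 0 ≤ x ∧ ⌊2 ^ j * x⌋₊ = m := by
  have h2 : (0:ℝ) < 2 ^ j := by positivity
  unfold dyI
  rw [Set.mem_Ico, div_le_iff₀ h2, lt_div_iff₀ h2]
  constructor
  · rintro ⟨h1, h3⟩
    have hx : 0 ≤ x := by
      have : (0:ℝ) ≤ x * 2 ^ j := le_trans (by positivity) h1
      exact nonneg_of_mul_nonneg_left this h2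
    refine ⟨hx, ?_⟩
    rw [Nat.floor_eq_iff (by positivity)]
    constructor <;> linarith
  · rintro ⟨h1, h3⟩
    rw [Nat.floor_eq_iff (by positivity)] at h3
    constructor <;> linarith [h3.1, h3.2]

lemma floor_dy {j j' : ℕ} (h : j ≤ j') (x : ℝ) :
    ⌊2 ^ j * x⌋₊ = ⌊2 ^ j' * x⌋₊ / 2 ^ (j' - j) := by
  rw [← Nat.floor_div_natCast]
  congr 1
  obtain ⟨d, rfl⟩ := Nat.exists_eq_add_of_le h
  push_cast
  rw [Nat.add_sub_cancel_left, pow_add]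
  field_simp

lemma dyI_split {j m : ℕ} {x : ℝ} :
    x ∈ dyI j m ↔ x ∈ dyI (j+1) (2*m) ∨ x ∈ dyI (j+1) (2*m+1) := by
  simp only [mem_dyI]
  rw [floor_dy (Nat.le_succ j) x]
  simp only [Nat.succ_eq_add_one, Nat.add_sub_cancel_left, pow_one]
  have : ∀ n : ℕ, n / 2 = m ↔ n = 2 * m ∨ n = 2*m+1 := by intro n; omega
  rw [this]; tauto

lemma dyI_disj {j m m' : ℕ} {x : ℝ} (h : x ∈ dyI j m) (h' : x ∈ dyI j m') : m = m' := by
  rw [mem_dyI] at h h'; rw [← h.2, ← h'.2]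

lemma dyI_lt {j m : ℕ} {x : ℝ} (h : x ∈ dyI j m) (hx : x < 1) : m < 2 ^ j := by
  rw [mem_dyI] at h
  rw [← h.2, Nat.floor_lt (by have := h.1; positivity)]
  push_cast
  have h2 : (0:ℝ) < 2 ^ j := by positivity
  nlinarith

lemma dyI_sub {j m : ℕ} (h : m < 2 ^ j) : dyI j m ⊆ Set.Ico 0 1 := by
  have h2 : (0:ℝ) < 2 ^ j := by positivity
  intro x hx
  unfold dyI at hx
  refine ⟨le_trans (by positivity) hx.1, lt_of_lt_of_le hx.2 ?_⟩
  rw [div_le_one h2]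
  exact_mod_cast h

def chi (j m : ℕ) (x : ℝ) : ℝ := (dyI j m).indicator 1 x

def haar (j m : ℕ) (x : ℝ) : ℝ := chi (j+1) (2*m) x - chi (j+1) (2*m+1) x

lemma measurable_chi (j m : ℕ) : Measurable (chi j m) :=
  measurable_one.indicator measurableSet_Ico

lemma measurable_haar (j m : ℕ) : Measurable (haar j m) :=
  (measurable_chi _ _).sub (measurable_chi _ _)

lemma chi_mem {j m : ℕ} {x : ℝ} (h : x ∈ dyI j m) : chi j m x = 1 := by simp [chi, h]
lemma chi_not_mem {j m : ℕ} {x : ℝ} (h : x ∉ dyI j m) : chi j m x = 0 := by simp [chi, h]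

lemma haar_not_mem {j m : ℕ} {x : ℝ} (h : x ∉ dyI j m) : haar j m x = 0 := by
  rw [dyI_split] at h
  push Not at h
  simp [haar, chi_not_mem h.1, chi_not_mem h.2]

lemma haar_sq {j m : ℕ} (x : ℝ) : haar j m x * haar j m x = chi j m x := by
  by_cases h : x ∈ dyI j m
  · rw [chi_mem h]
    rcases dyI_split.1 h with h1 | h1
    · have : x ∉ dyI (j+1) (2*m+1) := fun h2 => by have := dyI_disj h1 h2; omega
      simp [haar, chi_mem h1, chi_not_mem this]
    · have : x ∉ dyI (j+1) (2*m) := fun h2 => by have := dyI_disj h1 h2; omega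
      simp [haar, chi_mem h1, chi_not_mem this]
  · simp [haar_not_mem h, chi_not_mem h]

lemma abs_chi_le {j m : ℕ} (x : ℝ) : |chi j m x| ≤ 1 := by
  by_cases h : x ∈ dyI j m
  · simp [chi_mem h]
  · simp [chi_not_mem h]

lemma abs_haar_le {j m : ℕ} (x : ℝ) : |haar j m x| ≤ 1 := by
  have := haar_sq (j := j) (m := m) x
  have h2 := abs_chi_le (j := j) (m := m) x
  rw [← this, ← sq, abs_of_nonneg (sq_nonneg _)] at h2
  exact abs_le_one_iff_mul_self_le_one.2 (by rwa [← sq])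

lemma integral_dy {j m : ℕ} (h : m < 2 ^ j) (f : ℝ → ℝ) :
    ∫ x in Set.Ico (0:ℝ) 1, chi j m x * f x = ∫ x in ((m:ℝ) / 2 ^ j)..(((m:ℝ) + 1) / 2 ^ j), f x := by
  have e : (fun x => chi j m x * f x) = (dyI j m).indicator f := by
    ext x
    by_cases h : x ∈ dyI j m
    · simp [chi_mem h, h]
    · simp [chi_not_mem h, h]
  rw [e, setIntegral_indicator (show MeasurableSet (dyI j m) from measurableSet_Ico), Set.inter_eq_right.2 (dyI_sub h),
    intervalIntegral.integral_of_le (by gcongr; linarith), integral_Ioc_eq_integral_Ioo,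
    ← integral_Ico_eq_integral_Ioo]
  rfl

lemma integrable_chi_mul (j m : ℕ) (f : ℝ → ℝ) (hf : IntegrableOn f (Set.Ico 0 1)) :
    IntegrableOn (fun x => chi j m x * f x) (Set.Ico (0:ℝ) 1) := by
  refine Integrable.bdd_mul (c := 1) hf (measurable_chi j m).aestronglyMeasurable ?_
  exact Filter.Eventually.of_forall fun x => abs_chi_le x

lemma integral_haar_mul {j m : ℕ} (h : m < 2 ^ j) (f : ℝ → ℝ) (hf : IntegrableOn f (Set.Ico 0 1)) :
    ∫ x in Set.Ico (0:ℝ) 1, haar j m x * f x =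
      (∫ x in ((m:ℝ) / 2 ^ j)..(((m:ℝ) + 1/2) / 2 ^ j), f x) -
      ∫ x in (((m:ℝ) + 1/2) / 2 ^ j)..(((m:ℝ) + 1) / 2 ^ j), f x := by
  simp only [haar, sub_mul]
  rw [integral_sub (integrable_chi_mul _ _ f hf) (integrable_chi_mul _ _ f hf),
    integral_dy (by rw [pow_succ]; omega), integral_dy (by rw [pow_succ]; omega)]
  have h2 : (0:ℝ) < 2 ^ j := by positivity
  congr 2
  all_goals (push_cast; rw [pow_succ]; field_simp)
  ring

lemma integrableOn_one : IntegrableOn (fun _ : ℝ => (1:ℝ)) (Set.Ico (0:ℝ) 1) := by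
  simp

lemma integral_haar {j m : ℕ} (h : m < 2 ^ j) : ∫ x in Set.Ico (0:ℝ) 1, haar j m x = 0 := by
  have := integral_haar_mul h (fun _ => 1) integrableOn_one
  simp only [mul_one] at this
  rw [this]
  simp
  have h2 : (0:ℝ) < 2 ^ j := by positivity
  field_simp
  ring

lemma integral_haar_id {j m : ℕ} (h : m < 2 ^ j) :
    ∫ x in Set.Ico (0:ℝ) 1, haar j m x * x = - (1 / (4 * (2 ^ j) ^ 2)) := by
  rw [integral_haar_mul h (fun x => x) (by
    exact (continuous_id.integrableOn_Icc (a := (0:ℝ)) (b := 1)).mono_set Set.Ico_subset_Icc_self)]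
  rw [integral_id, integral_id]
  have h2 : (0:ℝ) < 2 ^ j := by positivity
  field_simp
  ring

lemma integral_haar_sq {j m : ℕ} (h : m < 2 ^ j) :
    ∫ x in Set.Ico (0:ℝ) 1, haar j m x * haar j m x = 1 / 2 ^ j := by
  simp only [haar_sq]
  have := integral_dy h (fun _ => 1)
  simp only [mul_one] at this
  rw [this]
  simp
  ring

lemma haar_mul_const {j j' m m' : ℕ} (h : j < j') :
    ∃ c : ℝ, ∀ x, haar j m x * haar j' m' x = c * haar j' m' x := by
  refine ⟨haar j m ((m':ℝ) / 2 ^ j'), fun x => ?_⟩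
  by_cases hx : x ∈ dyI j' m'
  · congr 1
    have h0 : (m':ℝ) / 2 ^ j' ∈ dyI j' m' := by
      refine ⟨le_refl _, ?_⟩
      gcongr; linarith
    have key : ∀ n, x ∈ dyI (j+1) n ↔ ((m':ℝ) / 2 ^ j') ∈ dyI (j+1) n := by
      intro n
      rw [mem_dyI, mem_dyI, floor_dy h x, floor_dy h ((m':ℝ) / 2 ^ j')]
      rw [mem_dyI] at hx h0
      rw [hx.2, h0.2]
      simp [hx.1, h0.1]
    have kc : ∀ n, chi (j+1) n x = chi (j+1) n ((m':ℝ) / 2 ^ j') := by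
      intro n
      by_cases hn : x ∈ dyI (j+1) n
      · rw [chi_mem hn, chi_mem ((key n).1 hn)]
      · rw [chi_not_mem hn, chi_not_mem (fun h3 => hn ((key n).2 h3))]
    simp only [haar, kc]
  · simp [haar_not_mem hx]

lemma haar_orth {j j' m m' : ℕ} (hm : m < 2 ^ j) (hm' : m' < 2 ^ j') (h : ¬ (j = j' ∧ m = m')) :
    ∫ x in Set.Ico (0:ℝ) 1, haar j m x * haar j' m' x = 0 := by
  rcases lt_trichotomy j j' with h1 | h1 | h1
  · obtain ⟨c, hc⟩ := haar_mul_const (m := m) (m' := m') h1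
    simp only [hc]
    rw [integral_const_mul, integral_haar hm', mul_zero]
  · subst h1
    have : ∀ x, haar j m x * haar j m' x = 0 := by
      intro x
      by_cases hx : x ∈ dyI j m
      · have : x ∉ dyI j m' := fun h2 => h ⟨rfl, dyI_disj hx h2⟩
        simp [haar_not_mem this]
      · simp [haar_not_mem hx]
    simp [this]
  · obtain ⟨c, hc⟩ := haar_mul_const (m := m') (m' := m) h1
    simp only [mul_comm (haar j m _), hc]
    rw [integral_const_mul, integral_haar hm, mul_zero]

def tau (j m : ℕ) (p : ℝ) : ℝ :=
  open Classical in if p ∈ dyI j m then 1 - |1 - 2 * (2 ^ j * p - m)| else 0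

def step (p x : ℝ) : ℝ := if p < x then 1 else 0

lemma measurable_step (p : ℝ) : Measurable (step p) :=
  Measurable.ite measurableSet_Ioi measurable_const measurable_const

lemma integrableOn_step (p : ℝ) : IntegrableOn (step p) (Set.Ico (0:ℝ) 1) := by
  refine Measure.integrableOn_of_bounded (M := 1) (by simp) (measurable_step p).aestronglyMeasurable ?_
  refine Filter.Eventually.of_forall fun x => ?_
  unfold step; split_ifs <;> simp

lemma integral_step (p a b : ℝ) (hab : a ≤ b) :
    ∫ x in a..b, step p x = max (b - max a p) 0 := by
  have e : step p = (Set.Ioi p).indicator 1 := by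
    ext x; simp [step, Set.indicator]
  rw [intervalIntegral.integral_of_le hab, e, setIntegral_indicator measurableSet_Ioi,
    Set.Ioc_inter_Ioi]
  simp [Measure.real, ENNReal.toReal_ofReal', max_comm]

lemma integral_haar_step {j m : ℕ} (h : m < 2 ^ j) (p : ℝ) :
    ∫ x in Set.Ico (0:ℝ) 1, haar j m x * step p x = - (tau j m p / (2 * 2 ^ j)) := by
  have h2 : (0:ℝ) < 2 ^ j := by positivity
  rw [integral_haar_mul h _ (integrableOn_step p), integral_step _ _ _ (by gcongr; norm_num),
    integral_step _ _ _ (by gcongr; norm_num)]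
  set q := 2 ^ j * p with hq
  have hp : p = q / 2 ^ j := by rw [hq]; field_simp
  have hmem : p ∈ dyI j m ↔ (m:ℝ) ≤ q ∧ q < m + 1 := by
    unfold dyI; rw [hp, Set.mem_Ico, div_le_div_iff_of_pos_right h2, div_lt_div_iff_of_pos_right h2]
  have hmx : ∀ a b : ℝ, max (b / 2 ^ j - max (a / 2 ^ j) p) 0 = max (b - max a q) 0 / 2 ^ j := by
    intro a b
    rw [hp, max_div_div_right h2.le, ← sub_div, ← max_div_div_right h2.le, zero_div]
  rw [hmx, hmx, ← sub_div, tau, ← hq]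
  have : - ((open Classical in if p ∈ dyI j m then 1 - |1 - 2 * (q - m)| else 0) / (2 * 2 ^ j))
    = (- (open Classical in if p ∈ dyI j m then 1 - |1 - 2 * (q - m)| else 0) / 2) / 2 ^ j := by
    field_simp
  rw [this]
  congr 1
  split_ifs with hc
  · rw [hmem] at hc
    rw [max_eq_right hc.1, max_eq_left (by linarith [le_max_right ((m:ℝ)+1/2) q, max_lt (by linarith : (m:ℝ)+1/2 < m+1) hc.2] : (0:ℝ) ≤ (m:ℝ)+1 - max ((m:ℝ)+1/2) q)]
    rcases le_total q (m + 1/2) with h3 | h3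
    · rw [max_eq_left h3, max_eq_left (by linarith), abs_of_nonneg (by linarith)]; ring
    · rw [max_eq_right h3, max_eq_right (by linarith), abs_of_nonpos (by linarith)]; ring
  · rw [hmem] at hc
    rcases lt_or_ge q m with h3 | h3
    · rw [max_eq_left h3.le, max_eq_left (by linarith : q ≤ (m:ℝ)+1/2), max_eq_left (by linarith),
        max_eq_left (by linarith)]
      ring
    · have h4 : (m:ℝ) + 1 ≤ q := by by_contra h5; exact hc ⟨h3, by linarith⟩
      rw [max_eq_right h3, max_eq_right (by linarith : (m:ℝ)+1/2 ≤ q), max_eq_right (by linarith),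
        max_eq_right (by linarith)]
      ring

lemma bessel {ι Ω : Type*} [MeasurableSpace Ω] (μ : Measure Ω) (s : Finset ι) (D : Ω → ℝ)
    (h : ι → Ω → ℝ) (w : ι → ℝ) (hD : Integrable (fun x => D x ^ 2) μ)
    (hDh : ∀ a ∈ s, Integrable (fun x => D x * h a x) μ)
    (hhh : ∀ a ∈ s, ∀ b ∈ s, Integrable (fun x => h a x * h b x) μ)
    (orth : ∀ a ∈ s, ∀ b ∈ s, a ≠ b → ∫ x, h a x * h b x ∂μ = 0)
    (norm : ∀ a ∈ s, ∫ x, h a x * h a x ∂μ = w a) (wpos : ∀ a ∈ s, 0 < w a) :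
    ∑ a ∈ s, (∫ x, D x * h a x ∂μ) ^ 2 / w a ≤ ∫ x, D x ^ 2 ∂μ := by
  set c : ι → ℝ := fun a => (∫ x, D x * h a x ∂μ) / w a with hc
  have h0 : 0 ≤ ∫ x, (D x - ∑ a ∈ s, c a * h a x) ^ 2 ∂μ :=
    integral_nonneg fun x => sq_nonneg _
  have e : ∀ x, (D x - ∑ a ∈ s, c a * h a x) ^ 2 = D x ^ 2 - 2 * ∑ a ∈ s, c a * (D x * h a x)
      + ∑ a ∈ s, ∑ b ∈ s, c a * c b * (h a x * h b x) := by
    intro x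
    have e1 : ∑ a ∈ s, ∑ b ∈ s, c a * c b * (h a x * h b x)
        = (∑ a ∈ s, c a * h a x) * (∑ a ∈ s, c a * h a x) := by
      rw [Finset.sum_mul_sum]
      exact Finset.sum_congr rfl fun a _ => Finset.sum_congr rfl fun b _ => by ring
    have e2 : ∑ a ∈ s, c a * (D x * h a x) = D x * ∑ a ∈ s, c a * h a x := by
      rw [Finset.mul_sum]
      exact Finset.sum_congr rfl fun a _ => by ring
    rw [e1, e2]; ring
  have i1 : Integrable (fun x => ∑ a ∈ s, c a * (D x * h a x)) μ :=
    integrable_finsetSum _ fun a ha => (hDh a ha).const_mul _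
  have i2 : Integrable (fun x => ∑ a ∈ s, ∑ b ∈ s, c a * c b * (h a x * h b x)) μ :=
    integrable_finsetSum _ fun a ha => integrable_finsetSum _ fun b hb =>
      (hhh a ha b hb).const_mul _
  simp only [e] at h0
  have i3 : Integrable (fun x => D x ^ 2 - 2 * ∑ a ∈ s, c a * (D x * h a x)) μ :=
    hD.sub (i1.const_mul 2)
  rw [integral_add i3 i2, integral_sub hD (i1.const_mul 2),
    integral_const_mul, integral_finsetSum _ (fun a ha => (hDh a ha).const_mul _),
    integral_finsetSum _ (fun a ha => integrable_finsetSum _ fun b hb =>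
      (hhh a ha b hb).const_mul _)] at h0
  have e3 : ∑ a ∈ s, ∫ x, ∑ b ∈ s, c a * c b * (h a x * h b x) ∂μ
      = ∑ a ∈ s, (∫ x, D x * h a x ∂μ) ^ 2 / w a := by
    refine Finset.sum_congr rfl fun a ha => ?_
    rw [integral_finsetSum _ (fun b hb => (hhh a ha b hb).const_mul _)]
    rw [Finset.sum_eq_single_of_mem a ha]
    · rw [integral_const_mul, norm a ha, hc]
      have := (wpos a ha).ne'
      field_simp
    · intro b hb hba
      rw [integral_const_mul, orth a ha b hb hba.symm, mul_zero]
  have e4 : ∑ a ∈ s, ∫ x, c a * (D x * h a x) ∂μ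
      = ∑ a ∈ s, (∫ x, D x * h a x ∂μ) ^ 2 / w a := by
    refine Finset.sum_congr rfl fun a ha => ?_
    rw [integral_const_mul, hc]
    ring
  rw [e3, e4] at h0
  linarith

lemma measurableSet_unitSq : MeasurableSet unitSq := measurableSet_Ico.prod measurableSet_Ico

lemma integrable_of_bdd {f : ℝ × ℝ → ℝ} (hf : Measurable f) (C : ℝ)
    (h : ∀ x ∈ unitSq, |f x| ≤ C) : IntegrableOn f unitSq := by
  refine Measure.integrableOn_of_bounded (M := C) ?_ hf.aestronglyMeasurable ?_
  · unfold unitSq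
    rw [Measure.volume_eq_prod, Measure.prod_prod]
    simp
  · exact (ae_restrict_iff' measurableSet_unitSq).2 (Filter.Eventually.of_forall fun x hx => h x hx)

lemma integral_unitSq_mul (f g : ℝ → ℝ) :
    ∫ x in unitSq, f x.1 * g x.2 = (∫ x in Set.Ico (0:ℝ) 1, f x) * ∫ x in Set.Ico (0:ℝ) 1, g x := by
  unfold unitSq
  rw [Measure.volume_eq_prod]
  exact setIntegral_prod_mul f g _ _

def haar2 (j m : ℕ × ℕ) (x : ℝ × ℝ) : ℝ := haar j.1 m.1 x.1 * haar j.2 m.2 x.2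

lemma measurable_haar2 (j m : ℕ × ℕ) : Measurable (haar2 j m) :=
  ((measurable_haar _ _).comp measurable_fst).mul ((measurable_haar _ _).comp measurable_snd)

lemma abs_haar2_le (j m : ℕ × ℕ) (x : ℝ × ℝ) : |haar2 j m x| ≤ 1 := by
  unfold haar2
  rw [abs_mul]
  exact mul_le_one₀ (abs_haar_le _) (abs_nonneg _) (abs_haar_le _)

lemma disc_eq {N : ℕ} {p : Fin N → ℝ × ℝ} (hp : ∀ i, p i ∈ unitSq) (x : ℝ × ℝ) :
    disc N p x = (∑ i, step (p i).1 x.1 * step (p i).2 x.2) - N * (x.1 * x.2) := by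
  unfold disc
  rw [← mul_assoc]
  congr 1
  refine Finset.sum_congr rfl fun i _ => ?_
  have h1 := (hp i).1.1
  have h2 := (hp i).2.1
  simp only [step, h1, h2, true_and]
  by_cases h3 : (p i).1 < x.1 <;> by_cases h4 : (p i).2 < x.2 <;> simp [h3, h4]

lemma measurable_term (q : ℝ × ℝ) : Measurable (fun x : ℝ × ℝ => step q.1 x.1 * step q.2 x.2) :=
  ((measurable_step _).comp measurable_fst).mul ((measurable_step _).comp measurable_snd)

lemma abs_term_le (q x : ℝ × ℝ) : |step q.1 x.1 * step q.2 x.2| ≤ 1 := by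
  unfold step
  split_ifs <;> simp

lemma measurable_disc {N : ℕ} {p : Fin N → ℝ × ℝ} (hp : ∀ i, p i ∈ unitSq) :
    Measurable (disc N p) := by
  have : disc N p = fun x => (∑ i, step (p i).1 x.1 * step (p i).2 x.2) - N * (x.1 * x.2) := by
    ext x; exact disc_eq hp x
  rw [this]
  refine (Finset.measurable_fun_sum _ fun i _ => measurable_term (p i)).sub ?_
  exact (measurable_fst.mul measurable_snd).const_mul _

lemma abs_xy_le {x : ℝ × ℝ} (hx : x ∈ unitSq) : |x.1 * x.2| ≤ 1 := by
  obtain ⟨⟨h1, h2⟩, h3, h4⟩ := hx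
  rw [abs_of_nonneg (by positivity)]
  nlinarith

lemma abs_disc_le {N : ℕ} {p : Fin N → ℝ × ℝ} (hp : ∀ i, p i ∈ unitSq) {x : ℝ × ℝ}
    (hx : x ∈ unitSq) : |disc N p x| ≤ 2 * N := by
  rw [disc_eq hp]
  refine (abs_sub _ _).trans ?_
  have h1 : |∑ i, step (p i).1 x.1 * step (p i).2 x.2| ≤ N := by
    refine (Finset.abs_sum_le_sum_abs _ _).trans ?_
    refine (Finset.sum_le_sum fun i _ => abs_term_le (p i) x).trans ?_
    simp
  have h2 : |(N:ℝ) * (x.1 * x.2)| ≤ N := by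
    rw [abs_mul, Nat.abs_cast]
    exact mul_le_of_le_one_right (by positivity) (abs_xy_le hx)
  linarith

def TT {N : ℕ} (p : Fin N → ℝ × ℝ) (j m : ℕ × ℕ) : ℝ :=
  ∑ i, tau j.1 m.1 (p i).1 * tau j.2 m.2 (p i).2

lemma integral_disc_haar2 {N : ℕ} {p : Fin N → ℝ × ℝ} (hp : ∀ i, p i ∈ unitSq) {j m : ℕ × ℕ}
    (h1 : m.1 < 2 ^ j.1) (h2 : m.2 < 2 ^ j.2) :
    ∫ x in unitSq, disc N p x * haar2 j m x =
      (TT p j m - N / 2 ^ (j.1 + j.2) / 4) / (4 * 2 ^ (j.1 + j.2)) := by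
  have e : ∀ x, disc N p x * haar2 j m x =
      (∑ i, (haar j.1 m.1 x.1 * step (p i).1 x.1) * (haar j.2 m.2 x.2 * step (p i).2 x.2))
       - N * ((haar j.1 m.1 x.1 * x.1) * (haar j.2 m.2 x.2 * x.2)) := by
    intro x
    rw [disc_eq hp, sub_mul, Finset.sum_mul]
    unfold haar2
    congr 1
    · exact Finset.sum_congr rfl fun i _ => by ring
    · ring
  have i1 : ∀ i, IntegrableOn (fun x : ℝ × ℝ => (haar j.1 m.1 x.1 * step (p i).1 x.1) * (haar j.2 m.2 x.2 * step (p i).2 x.2)) unitSq := by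
    intro i
    have : (fun x : ℝ × ℝ => (haar j.1 m.1 x.1 * step (p i).1 x.1) * (haar j.2 m.2 x.2 * step (p i).2 x.2)) = fun x => haar2 j m x * (step (p i).1 x.1 * step (p i).2 x.2) := by
      ext x; unfold haar2; ring
    rw [this]
    refine integrable_of_bdd ((measurable_haar2 j m).mul (measurable_term _)) 1 fun x hx => ?_
    rw [abs_mul]
    exact mul_le_one₀ (abs_haar2_le _ _ _) (abs_nonneg _) (abs_term_le _ _)
  have i2 : IntegrableOn (fun x : ℝ × ℝ => (haar j.1 m.1 x.1 * x.1) * (haar j.2 m.2 x.2 * x.2)) unitSq := by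
    have : (fun x : ℝ × ℝ => (haar j.1 m.1 x.1 * x.1) * (haar j.2 m.2 x.2 * x.2)) = fun x => haar2 j m x * (x.1 * x.2) := by
      ext x; unfold haar2; ring
    rw [this]
    refine integrable_of_bdd ((measurable_haar2 j m).mul (measurable_fst.mul measurable_snd)) 1 fun x hx => ?_
    rw [abs_mul]
    exact mul_le_one₀ (abs_haar2_le _ _ _) (abs_nonneg _) (abs_xy_le hx)
  simp only [e]
  rw [integral_sub (integrable_finsetSum _ fun i _ => i1 i) (i2.const_mul _),
    integral_finsetSum _ (fun i _ => i1 i), integral_const_mul,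
    integral_unitSq_mul (fun t => haar j.1 m.1 t * t) (fun t => haar j.2 m.2 t * t),
    integral_haar_id h1, integral_haar_id h2]
  have e2 : ∀ i, ∫ x in unitSq, (haar j.1 m.1 x.1 * step (p i).1 x.1) * (haar j.2 m.2 x.2 * step (p i).2 x.2)
      = tau j.1 m.1 (p i).1 * tau j.2 m.2 (p i).2 / (4 * 2 ^ (j.1 + j.2)) := by
    intro i
    rw [integral_unitSq_mul (fun t => haar j.1 m.1 t * step (p i).1 t) (fun t => haar j.2 m.2 t * step (p i).2 t),
      integral_haar_step h1, integral_haar_step h2, pow_add]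
    field_simp
    ring
  simp only [e2]
  rw [← Finset.sum_div, TT, sub_div, pow_add]
  congr 1
  field_simp

/-- squared normalised Haar coefficient -/
def CC {N : ℕ} (p : Fin N → ℝ × ℝ) (j m : ℕ × ℕ) : ℝ :=
  (TT p j m - N / 2 ^ (j.1 + j.2) / 4) ^ 2 / (16 * 2 ^ (j.1 + j.2))

lemma CC_nonneg {N : ℕ} (p : Fin N → ℝ × ℝ) (j m : ℕ × ℕ) : 0 ≤ CC p j m := by
  unfold CC; positivity

lemma haar2_prod (j m j' m' : ℕ × ℕ) : ∫ x in unitSq, haar2 j m x * haar2 j' m' x =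
    (∫ x in Set.Ico (0:ℝ) 1, haar j.1 m.1 x * haar j'.1 m'.1 x) *
      ∫ x in Set.Ico (0:ℝ) 1, haar j.2 m.2 x * haar j'.2 m'.2 x := by
  rw [← integral_unitSq_mul]
  congr 1
  ext x
  unfold haar2
  ring

def cells (j : ℕ × ℕ) : Finset (ℕ × ℕ) := Finset.range (2 ^ j.1) ×ˢ Finset.range (2 ^ j.2)

lemma mem_cells {j m : ℕ × ℕ} : m ∈ cells j ↔ m.1 < 2 ^ j.1 ∧ m.2 < 2 ^ j.2 := by
  simp [cells]

lemma bessel_disc {N : ℕ} {p : Fin N → ℝ × ℝ} (hp : ∀ i, p i ∈ unitSq) (J : Finset (ℕ × ℕ)) :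
    ∑ j ∈ J, ∑ m ∈ cells j, CC p j m ≤ L2disc N p ^ 2 := by
  unfold L2disc
  rw [Real.sq_sqrt (integral_nonneg fun x => sq_nonneg _)]
  rw [Finset.sum_sigma']
  have B := bessel (volume.restrict unitSq) (J.sigma cells) (disc N p)
    (fun a => haar2 a.1 a.2) (fun a => 1 / 2 ^ (a.1.1 + a.1.2)) ?_ ?_ ?_ ?_ ?_ ?_
  · refine le_trans (le_of_eq ?_) B
    refine Finset.sum_congr rfl fun a ha => ?_
    have ha' := mem_cells.1 (Finset.mem_sigma.1 ha).2
    rw [integral_disc_haar2 hp ha'.1 ha'.2, CC]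
    field_simp
    ring
  · refine integrable_of_bdd ((measurable_disc hp).pow_const 2) ((2 * N) ^ 2) fun x hx => ?_
    rw [abs_pow]
    exact pow_le_pow_left₀ (abs_nonneg _) (abs_disc_le hp hx) 2
  · intro a ha
    refine integrable_of_bdd ((measurable_disc hp).mul (measurable_haar2 _ _)) (2 * N * 1) fun x hx => ?_
    rw [abs_mul]
    exact mul_le_mul (abs_disc_le hp hx) (abs_haar2_le _ _ _) (abs_nonneg _) (by positivity)
  · intro a ha b hb
    refine integrable_of_bdd ((measurable_haar2 _ _).mul (measurable_haar2 _ _)) 1 fun x hx => ?_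
    rw [abs_mul]
    exact mul_le_one₀ (abs_haar2_le _ _ _) (abs_nonneg _) (abs_haar2_le _ _ _)
  · rintro ⟨j, m⟩ ha ⟨j', m'⟩ hb hab
    have ha' := mem_cells.1 (Finset.mem_sigma.1 ha).2
    have hb' := mem_cells.1 (Finset.mem_sigma.1 hb).2
    simp only at ha' hb'
    simp only
    rw [haar2_prod]
    by_cases h1 : j.1 = j'.1 ∧ m.1 = m'.1
    · have h2 : ¬ (j.2 = j'.2 ∧ m.2 = m'.2) := by
        intro h2
        apply hab
        have e1 : j = j' := Prod.ext h1.1 h2.1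
        have e2 : m = m' := Prod.ext h1.2 h2.2
        rw [e1, e2]
      rw [haar_orth ha'.2 hb'.2 h2, mul_zero]
    · rw [haar_orth ha'.1 hb'.1 h1, zero_mul]
  · intro a ha
    have ha' := mem_cells.1 (Finset.mem_sigma.1 ha).2
    rw [haar2_prod, integral_haar_sq ha'.1, integral_haar_sq ha'.2, pow_add]
    field_simp
  · intro a ha
    positivity

def inCell {N : ℕ} (p : Fin N → ℝ × ℝ) (j m : ℕ × ℕ) (i : Fin N) : Prop :=
  (p i).1 ∈ dyI j.1 m.1 ∧ (p i).2 ∈ dyI j.2 m.2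

open Classical in
def cnt {N : ℕ} (p : Fin N → ℝ × ℝ) (j m : ℕ × ℕ) : ℕ :=
  (Finset.univ.filter (inCell p j m)).card

lemma sum_cnt {N : ℕ} {p : Fin N → ℝ × ℝ} (hp : ∀ i, p i ∈ unitSq) (j : ℕ × ℕ) :
    ∑ m ∈ cells j, cnt p j m = N := by
  classical
  have h := Finset.card_eq_sum_card_fiberwise (s := (Finset.univ : Finset (Fin N)))
    (t := cells j) (f := fun i => (⌊2 ^ j.1 * (p i).1⌋₊, ⌊2 ^ j.2 * (p i).2⌋₊)) (by
      intro i _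
      simp only [Finset.mem_coe, mem_cells]
      exact ⟨dyI_lt (mem_dyI.2 ⟨(hp i).1.1, rfl⟩) (hp i).1.2,
        dyI_lt (mem_dyI.2 ⟨(hp i).2.1, rfl⟩) (hp i).2.2⟩)
  rw [Finset.card_univ, Fintype.card_fin] at h
  refine Eq.trans ?_ h.symm
  refine Finset.sum_congr rfl fun m _ => ?_
  unfold cnt
  congr 1
  ext i
  simp only [Finset.mem_filter, Finset.mem_univ, true_and, inCell, mem_dyI, (hp i).1.1, (hp i).2.1,
    Prod.ext_iff]

lemma inCell_split1 {N : ℕ} (p : Fin N → ℝ × ℝ) (j m : ℕ × ℕ) (i : Fin N) :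
    inCell p j m i ↔ inCell p (j.1+1, j.2) (2*m.1, m.2) i ∨ inCell p (j.1+1, j.2) (2*m.1+1, m.2) i := by
  unfold inCell; rw [dyI_split]; tauto

lemma inCell_split2 {N : ℕ} (p : Fin N → ℝ × ℝ) (j m : ℕ × ℕ) (i : Fin N) :
    inCell p j m i ↔ inCell p (j.1, j.2+1) (m.1, 2*m.2) i ∨ inCell p (j.1, j.2+1) (m.1, 2*m.2+1) i := by
  unfold inCell; rw [dyI_split (j := j.2)]; tauto

lemma cnt_split1 {N : ℕ} (p : Fin N → ℝ × ℝ) (j m : ℕ × ℕ) :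
    cnt p j m = cnt p (j.1+1, j.2) (2*m.1, m.2) + cnt p (j.1+1, j.2) (2*m.1+1, m.2) := by
  classical
  unfold cnt
  rw [← Finset.card_union_of_disjoint]
  · congr 1
    ext i
    simp only [Finset.mem_filter, Finset.mem_univ, true_and, Finset.mem_union]
    exact inCell_split1 p j m i
  · rw [Finset.disjoint_left]
    intro i h1 h2
    simp only [Finset.mem_filter, Finset.mem_univ, true_and] at h1 h2
    have := dyI_disj h1.1 h2.1
    simp only at this
    omega

lemma cnt_split2 {N : ℕ} (p : Fin N → ℝ × ℝ) (j m : ℕ × ℕ) :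
    cnt p j m = cnt p (j.1, j.2+1) (m.1, 2*m.2) + cnt p (j.1, j.2+1) (m.1, 2*m.2+1) := by
  classical
  unfold cnt
  rw [← Finset.card_union_of_disjoint]
  · congr 1
    ext i
    simp only [Finset.mem_filter, Finset.mem_univ, true_and, Finset.mem_union]
    exact inCell_split2 p j m i
  · rw [Finset.disjoint_left]
    intro i h1 h2
    simp only [Finset.mem_filter, Finset.mem_univ, true_and] at h1 h2
    have := dyI_disj h1.2 h2.2
    simp only at this
    omega

def Uniq {N : ℕ} (p : Fin N → ℝ × ℝ) (j m : ℕ × ℕ) (i : Fin N) : Prop :=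
  inCell p j m i ∧ ∀ i', inCell p j m i' → i' = i

lemma tau_mul_zero {N : ℕ} (p : Fin N → ℝ × ℝ) (j m : ℕ × ℕ) (i : Fin N) (h : ¬ inCell p j m i) :
    tau j.1 m.1 (p i).1 * tau j.2 m.2 (p i).2 = 0 := by
  unfold inCell at h
  by_cases h1 : (p i).1 ∈ dyI j.1 m.1
  · have h2 : (p i).2 ∉ dyI j.2 m.2 := fun h2 => h ⟨h1, h2⟩
    simp [tau, h2]
  · simp [tau, h1]

lemma TT_uniq {N : ℕ} {p : Fin N → ℝ × ℝ} {j m : ℕ × ℕ} {i : Fin N} (h : Uniq p j m i) :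
    TT p j m = tau j.1 m.1 (p i).1 * tau j.2 m.2 (p i).2 := by
  unfold TT
  rw [Finset.sum_eq_single_of_mem i (Finset.mem_univ i)]
  intro b _ hb
  exact tau_mul_zero p j m b fun h2 => hb (h.2 b h2)

lemma TT_zero {N : ℕ} {p : Fin N → ℝ × ℝ} {j m : ℕ × ℕ} (h : cnt p j m = 0) :
    TT p j m = 0 := by
  classical
  unfold TT
  refine Finset.sum_eq_zero fun i _ => tau_mul_zero p j m i fun h2 => ?_
  unfold cnt at h
  rw [Finset.card_eq_zero] at h
  have : i ∈ Finset.univ.filter (inCell p j m) := by simp [h2]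
  rw [h] at this
  simp at this

lemma exists_uniq {N : ℕ} {p : Fin N → ℝ × ℝ} {j m : ℕ × ℕ} (h : cnt p j m = 1) :
    ∃ i, Uniq p j m i := by
  classical
  unfold cnt at h
  rw [Finset.card_eq_one] at h
  obtain ⟨i, hi⟩ := h
  have key : ∀ i', inCell p j m i' ↔ i' = i := by
    intro i'
    have : i' ∈ Finset.univ.filter (inCell p j m) ↔ i' ∈ ({i} : Finset (Fin N)) := by rw [hi]
    simpa using this
  exact ⟨i, (key i).2 rfl, fun i' => (key i').1⟩

lemma cnt_ne_zero {N : ℕ} {p : Fin N → ℝ × ℝ} {j m : ℕ × ℕ} {i : Fin N} (h : inCell p j m i) :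
    cnt p j m ≠ 0 := by
  unfold cnt
  rw [Finset.card_ne_zero]
  exact ⟨i, by simp [h]⟩

lemma tau_mem {j m : ℕ} {x : ℝ} (h : x ∈ dyI j m) : 0 ≤ tau j m x ∧ tau j m x ≤ 1 := by
  have h2 : (0:ℝ) < 2 ^ j := by positivity
  simp only [tau, h, if_true]
  unfold dyI at h
  rw [Set.mem_Ico, div_le_iff₀ h2, lt_div_iff₀ h2] at h
  constructor
  · have : |1 - 2 * (2 ^ j * x - m)| ≤ 1 := by rw [abs_le]; constructor <;> linarith [h.1, h.2]
    linarith
  · linarith [abs_nonneg (1 - 2 * (2 ^ j * x - (m:ℝ)))]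

lemma tau_child {j m n : ℕ} {x : ℝ} (h : x ∈ dyI (j+1) n) (hn : n = 2 * m ∨ n = 2 * m + 1) :
    tau (j+1) n x = 2 * min (tau j m x) (1 - tau j m x) := by
  have hm : x ∈ dyI j m := by
    rw [dyI_split]
    rcases hn with rfl | rfl
    · exact Or.inl h
    · exact Or.inr h
  have h2 : (0:ℝ) < 2 ^ (j+1) := by positivity
  simp only [tau, h, hm, if_true]
  unfold dyI at h
  rw [Set.mem_Ico, div_le_iff₀ h2, lt_div_iff₀ h2] at h
  obtain ⟨h3, h4⟩ := h
  rw [pow_succ] at *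
  set y := 2 ^ j * x with hy
  have e : x * (2 ^ j * 2) = 2 * y := by rw [hy]; ring
  have e2 : 2 ^ j * 2 * x = 2 * y := by rw [hy]; ring
  rw [e] at h3 h4
  rw [e2]
  rcases hn with rfl | rfl
  · push_cast at *
    rw [abs_of_nonneg (by linarith : (0:ℝ) ≤ 1 - 2 * (y - m))]
    rcases le_total (1 - (1 - 2 * (y - m))) (1 - (1 - (1 - 2 * (y - m)))) with h5 | h5
    · rw [min_eq_left h5, abs_of_nonneg (by linarith)]; ring
    · rw [min_eq_right h5, abs_of_nonpos (by linarith)]; ring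
  · push_cast at *
    rw [abs_of_nonpos (by linarith : 1 - 2 * (y - m) ≤ (0:ℝ))]
    rcases le_total (1 - -(1 - 2 * (y - m))) (1 - (1 - -(1 - 2 * (y - m)))) with h5 | h5
    · rw [min_eq_left h5, abs_of_nonpos (by linarith)]; ring
    · rw [min_eq_right h5, abs_of_nonneg (by linarith)]; ring

def CP {N : ℕ} (p : Fin N → ℝ × ℝ) (j m : ℕ × ℕ) : ℝ := if cnt p j m = 0 then 0 else CC p j m
def CE {N : ℕ} (p : Fin N → ℝ × ℝ) (j m : ℕ × ℕ) : ℝ := if cnt p j m = 0 then CC p j m else 0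

lemma CP_nonneg {N : ℕ} (p : Fin N → ℝ × ℝ) (j m : ℕ × ℕ) : 0 ≤ CP p j m := by
  unfold CP; split_ifs; exacts [le_rfl, CC_nonneg _ _ _]
lemma CE_nonneg {N : ℕ} (p : Fin N → ℝ × ℝ) (j m : ℕ × ℕ) : 0 ≤ CE p j m := by
  unfold CE; split_ifs; exacts [CC_nonneg _ _ _, le_rfl]
lemma CP_add_CE {N : ℕ} (p : Fin N → ℝ × ℝ) (j m : ℕ × ℕ) : CP p j m + CE p j m = CC p j m := by
  unfold CP CE; split_ifs <;> simp

def ch1 (F : ℕ × ℕ → ℕ × ℕ → ℝ) (j m : ℕ × ℕ) : ℝ :=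
  F (j.1+1, j.2) (2*m.1, m.2) + F (j.1+1, j.2) (2*m.1+1, m.2)
def ch2 (F : ℕ × ℕ → ℕ × ℕ → ℝ) (j m : ℕ × ℕ) : ℝ :=
  F (j.1, j.2+1) (m.1, 2*m.2) + F (j.1, j.2+1) (m.1, 2*m.2+1)

lemma ch1_mono {F G : ℕ × ℕ → ℕ × ℕ → ℝ} (h : ∀ j m, F j m ≤ G j m) (j m : ℕ × ℕ) :
    ch1 F j m ≤ ch1 G j m := add_le_add (h _ _) (h _ _)
lemma ch2_mono {F G : ℕ × ℕ → ℕ × ℕ → ℝ} (h : ∀ j m, F j m ≤ G j m) (j m : ℕ × ℕ) :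
    ch2 F j m ≤ ch2 G j m := add_le_add (h _ _) (h _ _)

def psi {N : ℕ} (p : Fin N → ℝ × ℝ) (j m : ℕ × ℕ) : ℝ :=
  CC p j m + (ch1 (CP p) j m + ch2 (CP p) j m) / 2
def phi {N : ℕ} (p : Fin N → ℝ × ℝ) (j m : ℕ × ℕ) : ℝ :=
  CC p j m + (ch1 (psi p) j m + ch2 (psi p) j m) / 2

lemma CC_le_psi {N : ℕ} (p : Fin N → ℝ × ℝ) (j m : ℕ × ℕ) : CC p j m ≤ psi p j m := by
  have h1 : 0 ≤ ch1 (CP p) j m := add_nonneg (CP_nonneg _ _ _) (CP_nonneg _ _ _)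
  have h2 : 0 ≤ ch2 (CP p) j m := add_nonneg (CP_nonneg _ _ _) (CP_nonneg _ _ _)
  unfold psi; linarith

lemma psi_nonneg {N : ℕ} (p : Fin N → ℝ × ℝ) (j m : ℕ × ℕ) : 0 ≤ psi p j m :=
  (CC_nonneg _ _ _).trans (CC_le_psi _ _ _)

def ee (N k : ℕ) : ℝ := ((N:ℝ) / 2 ^ k) ^ 2 / 256 / 2 ^ k

lemma ee_nonneg (N k : ℕ) : 0 ≤ ee N k := by unfold ee; positivity

lemma CC_empty {N : ℕ} {p : Fin N → ℝ × ℝ} {j m : ℕ × ℕ} (h : cnt p j m = 0) :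
    CC p j m = ee N (j.1 + j.2) := by
  unfold CC ee
  rw [TT_zero h]
  field_simp
  ring

def GamOK (g l : ℝ) : Prop := 0 ≤ g ∧ 3 * g ≤ l ^ 2 / 256 ∧
  ∀ u v : ℝ, 0 ≤ u → u ≤ 1 → 0 ≤ v → v ≤ 1 →
    16 * g ≤ (u * v - l / 4) ^ 2 + (u * min v (1 - v) - l / 16) ^ 2 + (min u (1 - u) * v - l / 16) ^ 2

lemma gamOK (κ : ℝ) : GamOK (gam κ) ((2:ℝ) ^ κ) := by
  have e2 : (2:ℝ) ^ (κ - 2) = 2 ^ κ / 4 := by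
    rw [Real.rpow_sub (by norm_num)]; norm_num
  have e4 : (2:ℝ) ^ (κ - 4) = 2 ^ κ / 16 := by
    rw [Real.rpow_sub (by norm_num)]; norm_num
  have e13 : (2:ℝ) ^ (2 * κ - 13) = (2 ^ κ) ^ 2 / 8192 := by
    rw [Real.rpow_sub (by norm_num), mul_comm, Real.rpow_mul (by norm_num)]; norm_num
  have em4 : (2:ℝ) ^ (-4:ℝ) = 1 / 16 := by
    rw [Real.rpow_neg (by norm_num)]; norm_num
  have hg0 : ∀ α β, 0 ≤ gk κ α β := fun α β => by unfold gk; positivity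
  have hh0 : 0 ≤ hfun κ := by
    apply Real.sInf_nonneg
    rintro t ⟨α, β, _, _, _, _, rfl⟩
    exact hg0 α β
  have hle : ∀ α β : ℝ, 1/2 ≤ α → α < 1 → 1/2 ≤ β → β < 1 → hfun κ ≤ gk κ α β := by
    intro α β h1 h2 h3 h4
    refine csInf_le ⟨0, ?_⟩ ⟨α, β, h1, h2, h3, h4, rfl⟩
    rintro t ⟨α, β, _, _, _, _, rfl⟩
    exact hg0 α β
  have hle' : ∀ α β : ℝ, 1/2 ≤ α → α ≤ 1 → 1/2 ≤ β → β ≤ 1 → hfun κ ≤ gk κ α β := by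
    intro α β h1 h2 h3 h4
    have hc : Continuous (fun z : ℝ × ℝ => gk κ z.1 z.2) := by unfold gk; fun_prop
    have hcl : (α, β) ∈ closure (Set.Ico (1/2:ℝ) 1 ×ˢ Set.Ico (1/2:ℝ) 1) := by
      rw [closure_prod_eq, closure_Ico (by norm_num)]
      exact ⟨⟨h1, h2⟩, h3, h4⟩
    have hs : closure (Set.Ico (1/2:ℝ) 1 ×ˢ Set.Ico (1/2:ℝ) 1) ⊆ {z : ℝ × ℝ | hfun κ ≤ gk κ z.1 z.2} := by
      refine closure_minimal ?_ (isClosed_le continuous_const hc)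
      rintro ⟨a, b⟩ ⟨⟨h1, h2⟩, h3, h4⟩
      exact hle a b h1 h2 h3 h4
    exact hs hcl
  set l := (2:ℝ) ^ κ with hl
  have g1 : gam κ ≤ 9 * (l ^ 2 / 8192) := by
    unfold gam; rw [e13]; exact min_le_left _ _
  have g2 : gam κ ≤ 1 / 16 * hfun κ := by
    unfold gam; rw [em4]; exact min_le_right _ _
  refine ⟨?_, ?_, ?_⟩
  · unfold gam
    rw [e13, em4]
    exact le_min (by positivity) (by positivity)
  · nlinarith [sq_nonneg l]
  · intro u v hu0 hu1 hv0 hv1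
    rcases lt_or_ge u (1/2) with hu | hu
    · rw [min_eq_left (by linarith : u ≤ 1 - u)]
      nlinarith [sq_nonneg (u * min v (1 - v) - l / 16), sq_nonneg ((u * v - l / 4) + (u * v - l/16))]
    · rcases lt_or_ge v (1/2) with hv | hv
      · rw [min_eq_left (by linarith : v ≤ 1 - v)]
        nlinarith [sq_nonneg (min u (1 - u) * v - l / 16), sq_nonneg ((u * v - l / 4) + (u * v - l/16))]
      · rw [min_eq_right (by linarith : 1 - u ≤ u), min_eq_right (by linarith : 1 - v ≤ v)]
        have := hle' u v hu hu1 hv hv1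
        unfold gk at this
        rw [e2, e4] at this
        linarith

lemma psi_single {N : ℕ} {p : Fin N → ℝ × ℝ} {j m : ℕ × ℕ} (h : cnt p j m = 1) {g : ℝ}
    (hg : GamOK g ((N:ℝ) / 2 ^ (j.1 + j.2))) : g / 2 ^ (j.1 + j.2) ≤ psi p j m := by
  obtain ⟨i, hi⟩ := exists_uniq h
  set u := tau j.1 m.1 (p i).1 with hu
  set v := tau j.2 m.2 (p i).2 with hv
  have hu' := tau_mem hi.1.1
  have hv' := tau_mem hi.1.2
  have c0 : CC p j m = (u * v - N / 2 ^ (j.1 + j.2) / 4) ^ 2 / (16 * 2 ^ (j.1 + j.2)) := by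
    rw [CC, TT_uniq hi]
  have c1 : (min u (1 - u) * v - N / 2 ^ (j.1 + j.2) / 16) ^ 2 / (8 * 2 ^ (j.1 + j.2)) ≤ ch1 (CP p) j m := by
    have key : ∀ n, (n = 2 * m.1 ∨ n = 2 * m.1 + 1) → inCell p (j.1+1, j.2) (n, m.2) i →
        CP p (j.1+1, j.2) (n, m.2) =
          (min u (1 - u) * v - N / 2 ^ (j.1 + j.2) / 16) ^ 2 / (8 * 2 ^ (j.1 + j.2)) := by
      intro n hn hc
      have hq : Uniq p (j.1+1, j.2) (n, m.2) i := by
        refine ⟨hc, fun i' hi' => hi.2 i' ?_⟩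
        rw [inCell_split1]
        rcases hn with rfl | rfl
        · exact Or.inl hi'
        · exact Or.inr hi'
      rw [CP, if_neg (cnt_ne_zero hc), CC, TT_uniq hq]
      simp only
      rw [tau_child hc.1 hn, ← hu, ← hv, show j.1 + 1 + j.2 = j.1 + j.2 + 1 by ring, pow_succ]
      field_simp
      ring
    rcases (inCell_split1 p j m i).1 hi.1 with hc | hc
    · have := key _ (Or.inl rfl) hc
      unfold ch1
      linarith [CP_nonneg p (j.1+1, j.2) (2*m.1+1, m.2)]
    · have := key _ (Or.inr rfl) hc
      unfold ch1
      linarith [CP_nonneg p (j.1+1, j.2) (2*m.1, m.2)]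
  have c2 : (u * min v (1 - v) - N / 2 ^ (j.1 + j.2) / 16) ^ 2 / (8 * 2 ^ (j.1 + j.2)) ≤ ch2 (CP p) j m := by
    have key : ∀ n, (n = 2 * m.2 ∨ n = 2 * m.2 + 1) → inCell p (j.1, j.2+1) (m.1, n) i →
        CP p (j.1, j.2+1) (m.1, n) =
          (u * min v (1 - v) - N / 2 ^ (j.1 + j.2) / 16) ^ 2 / (8 * 2 ^ (j.1 + j.2)) := by
      intro n hn hc
      have hq : Uniq p (j.1, j.2+1) (m.1, n) i := by
        refine ⟨hc, fun i' hi' => hi.2 i' ?_⟩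
        rw [inCell_split2]
        rcases hn with rfl | rfl
        · exact Or.inl hi'
        · exact Or.inr hi'
      rw [CP, if_neg (cnt_ne_zero hc), CC, TT_uniq hq]
      simp only
      rw [tau_child hc.2 hn, ← hu, ← hv, show j.1 + (j.2 + 1) = j.1 + j.2 + 1 by ring, pow_succ]
      field_simp
      ring
    rcases (inCell_split2 p j m i).1 hi.1 with hc | hc
    · have := key _ (Or.inl rfl) hc
      unfold ch2
      linarith [CP_nonneg p (j.1, j.2+1) (m.1, 2*m.2+1)]
    · have := key _ (Or.inr rfl) hc
      unfold ch2
      linarith [CP_nonneg p (j.1, j.2+1) (m.1, 2*m.2)]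
  have hgg := hg.2.2 u v hu'.1 hu'.2 hv'.1 hv'.2
  unfold psi
  rw [c0]
  set P : ℝ := 2 ^ (j.1 + j.2) with hP
  have hPp : 0 < P := by positivity
  have : g / P ≤ (u * v - N / P / 4) ^ 2 / (16 * P) +
      ((min u (1 - u) * v - N / P / 16) ^ 2 / (8 * P) + (u * min v (1 - v) - N / P / 16) ^ 2 / (8 * P)) / 2 := by
    have e : (u * v - N / P / 4) ^ 2 / (16 * P) +
      ((min u (1 - u) * v - N / P / 16) ^ 2 / (8 * P) + (u * min v (1 - v) - N / P / 16) ^ 2 / (8 * P)) / 2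
      = (((u * v - N / P / 4) ^ 2 + (u * min v (1 - v) - N / P / 16) ^ 2 +
        (min u (1 - u) * v - N / P / 16) ^ 2) / 16) / P := by
      generalize (u * v - N / P / 4) ^ 2 = a
      generalize (u * min v (1 - v) - N / P / 16) ^ 2 = b
      generalize (min u (1 - u) * v - N / P / 16) ^ 2 = c
      field_simp
      ring
    rw [e]
    gcongr
    linarith
  linarith

lemma ee_ge {N k : ℕ} {g : ℝ} (hg : GamOK g ((N:ℝ) / 2 ^ k)) : 3 * (g / 2 ^ k) ≤ ee N k := by
  unfold ee
  rw [← mul_div_assoc]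
  gcongr
  exact hg.2.1

lemma psi_ge {N : ℕ} {p : Fin N → ℝ × ℝ} {j m : ℕ × ℕ} {k : ℕ} (hk : j.1 + j.2 = k) {g : ℝ}
    (hg : GamOK g ((N:ℝ) / 2 ^ k)) :
    (1 - (cnt p j m : ℝ)) * ee N k + (2 * cnt p j m - 1) * (g / 2 ^ k) ≤ psi p j m := by
  have h1 := ee_ge hg
  have h0 : 0 ≤ g / 2 ^ k := div_nonneg hg.1 (by positivity)
  subst hk
  rcases Nat.lt_or_ge (cnt p j m) 2 with h | h
  · interval_cases hc : cnt p j m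
    · have := CC_le_psi p j m
      rw [CC_empty hc] at this
      push_cast
      linarith
    · have := psi_single hc hg
      push_cast
      linarith
  · have h2 : (2:ℝ) ≤ cnt p j m := by exact_mod_cast h
    have := psi_nonneg p j m
    nlinarith

lemma phi_ge {N : ℕ} {p : Fin N → ℝ × ℝ} {j m : ℕ × ℕ} {k : ℕ} (hk : j.1 + j.2 = k) {g g' : ℝ}
    (hg : GamOK g ((N:ℝ) / 2 ^ k)) (hg' : GamOK g' ((N:ℝ) / 2 ^ (k+1))) :
    (2 - (cnt p j m : ℝ)) * (g / 2 ^ k) + (2 * cnt p j m - 2) * (g' / 2 ^ (k+1))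
      + (2 - (cnt p j m : ℝ)) * ee N (k+1) ≤ phi p j m := by
  have h1 := ee_ge hg
  have h0 : 0 ≤ g / 2 ^ k := div_nonneg hg.1 (by positivity)
  have hk1 : j.1 + 1 + j.2 = k + 1 := by omega
  have hk2 : j.1 + (j.2 + 1) = k + 1 := by omega
  have s1 : (cnt p j m : ℝ) = cnt p (j.1+1, j.2) (2*m.1, m.2) + cnt p (j.1+1, j.2) (2*m.1+1, m.2) := by
    exact_mod_cast cnt_split1 p j m
  have s2 : (cnt p j m : ℝ) = cnt p (j.1, j.2+1) (m.1, 2*m.2) + cnt p (j.1, j.2+1) (m.1, 2*m.2+1) := by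
    exact_mod_cast cnt_split2 p j m
  by_cases h : cnt p j m = 1
  · have a1 := cnt_split1 p j m
    have a2 := cnt_split2 p j m
    have hE1 : ee N (k+1) ≤ ch1 (CE p) j m := by
      unfold ch1
      have n1 := CE_nonneg p (j.1+1, j.2) (2*m.1, m.2)
      have n2 := CE_nonneg p (j.1+1, j.2) (2*m.1+1, m.2)
      have : cnt p (j.1+1, j.2) (2*m.1, m.2) = 0 ∨ cnt p (j.1+1, j.2) (2*m.1+1, m.2) = 0 := by omega
      rcases this with hz | hz
      · have e : CE p (j.1+1, j.2) (2*m.1, m.2) = ee N (k+1) := by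
          rw [CE, if_pos hz, CC_empty hz, hk1]
        linarith
      · have e : CE p (j.1+1, j.2) (2*m.1+1, m.2) = ee N (k+1) := by
          rw [CE, if_pos hz, CC_empty hz, hk1]
        linarith
    have hE2 : ee N (k+1) ≤ ch2 (CE p) j m := by
      unfold ch2
      have n1 := CE_nonneg p (j.1, j.2+1) (m.1, 2*m.2)
      have n2 := CE_nonneg p (j.1, j.2+1) (m.1, 2*m.2+1)
      have : cnt p (j.1, j.2+1) (m.1, 2*m.2) = 0 ∨ cnt p (j.1, j.2+1) (m.1, 2*m.2+1) = 0 := by omega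
      rcases this with hz | hz
      · have e : CE p (j.1, j.2+1) (m.1, 2*m.2) = ee N (k+1) := by
          rw [CE, if_pos hz, CC_empty hz, hk2]
        linarith
      · have e : CE p (j.1, j.2+1) (m.1, 2*m.2+1) = ee N (k+1) := by
          rw [CE, if_pos hz, CC_empty hz, hk2]
        linarith
    have hle : ∀ j m, CP p j m + CE p j m ≤ psi p j m := fun j m => by
      rw [CP_add_CE]; exact CC_le_psi p j m
    have b1 : ch1 (CP p) j m + ch1 (CE p) j m ≤ ch1 (psi p) j m := by
      have := ch1_mono hle j m
      unfold ch1 at *; linarith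
    have b2 : ch2 (CP p) j m + ch2 (CE p) j m ≤ ch2 (psi p) j m := by
      have := ch2_mono hle j m
      unfold ch2 at *; linarith
    have hs := psi_single h (by rw [hk]; exact hg)
    rw [hk] at hs
    unfold psi at hs
    rw [h]
    unfold phi
    push_cast
    linarith
  · have hC : (2 - (cnt p j m : ℝ)) * (g / 2 ^ k) ≤ CC p j m := by
      rcases Nat.lt_or_ge (cnt p j m) 2 with h2 | h2
      · have h3 : cnt p j m = 0 := by omega
        rw [CC_empty h3, h3, hk]
        push_cast
        linarith
      · have h3 : (2:ℝ) ≤ cnt p j m := by exact_mod_cast h2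
        have := CC_nonneg p j m
        nlinarith
    have p1 := psi_ge (p := p) (j := (j.1+1, j.2)) (m := (2*m.1, m.2)) hk1 hg'
    have p2 := psi_ge (p := p) (j := (j.1+1, j.2)) (m := (2*m.1+1, m.2)) hk1 hg'
    have p3 := psi_ge (p := p) (j := (j.1, j.2+1)) (m := (m.1, 2*m.2)) hk2 hg'
    have p4 := psi_ge (p := p) (j := (j.1, j.2+1)) (m := (m.1, 2*m.2+1)) hk2 hg'
    have q1 : (2 - (cnt p j m : ℝ)) * ee N (k+1) + (2 * cnt p j m - 2) * (g' / 2 ^ (k+1)) ≤ ch1 (psi p) j m := by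
      unfold ch1; rw [s1]; linarith
    have q2 : (2 - (cnt p j m : ℝ)) * ee N (k+1) + (2 * cnt p j m - 2) * (g' / 2 ^ (k+1)) ≤ ch2 (psi p) j m := by
      unfold ch2; rw [s2]; linarith
    unfold phi
    linarith

def Z (F : ℕ × ℕ → ℕ × ℕ → ℝ) (j : ℕ × ℕ) : ℝ := ∑ m ∈ cells j, F j m
def Lv (F : ℕ × ℕ → ℕ × ℕ → ℝ) (k : ℕ) : ℝ := ∑ j ∈ Finset.HasAntidiagonal.antidiagonal k, Z F j

lemma sum_range_double (f : ℕ → ℝ) (n : ℕ) :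
    ∑ m ∈ Finset.range (2 * n), f m = ∑ m ∈ Finset.range n, (f (2 * m) + f (2 * m + 1)) := by
  induction n with
  | zero => simp
  | succ n ih =>
    rw [show 2 * (n + 1) = 2 * n + 1 + 1 by ring, Finset.sum_range_succ, Finset.sum_range_succ, ih,
      Finset.sum_range_succ]
    ring

lemma Z_ch1 (F : ℕ × ℕ → ℕ × ℕ → ℝ) (j : ℕ × ℕ) : Z (ch1 F) j = Z F (j.1+1, j.2) := by
  unfold Z cells ch1
  rw [Finset.sum_product_right, Finset.sum_product_right]
  refine Finset.sum_congr rfl fun y _ => ?_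
  simp only
  rw [show 2 ^ (j.1+1) = 2 * 2 ^ j.1 by ring, sum_range_double]

lemma Z_ch2 (F : ℕ × ℕ → ℕ × ℕ → ℝ) (j : ℕ × ℕ) : Z (ch2 F) j = Z F (j.1, j.2+1) := by
  unfold Z cells ch2
  rw [Finset.sum_product, Finset.sum_product]
  refine Finset.sum_congr rfl fun y _ => ?_
  simp only
  rw [show 2 ^ (j.2+1) = 2 * 2 ^ j.2 by ring, sum_range_double]

lemma Z_nonneg {F : ℕ × ℕ → ℕ × ℕ → ℝ} (h : ∀ j m, 0 ≤ F j m) (j : ℕ × ℕ) : 0 ≤ Z F j :=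
  Finset.sum_nonneg fun m _ => h j m

lemma Lv_nonneg {F : ℕ × ℕ → ℕ × ℕ → ℝ} (h : ∀ j m, 0 ≤ F j m) (k : ℕ) : 0 ≤ Lv F k :=
  Finset.sum_nonneg fun j _ => Z_nonneg h j

lemma Lv_ch1 {F : ℕ × ℕ → ℕ × ℕ → ℝ} (h : ∀ j m, 0 ≤ F j m) (k : ℕ) : Lv (ch1 F) k ≤ Lv F (k+1) := by
  unfold Lv
  rw [Finset.Nat.sum_antidiagonal_succ]
  simp only [Z_ch1]
  have := Z_nonneg h (0, k+1)
  linarith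

lemma Lv_ch2 {F : ℕ × ℕ → ℕ × ℕ → ℝ} (h : ∀ j m, 0 ≤ F j m) (k : ℕ) : Lv (ch2 F) k ≤ Lv F (k+1) := by
  unfold Lv
  rw [Finset.Nat.sum_antidiagonal_succ']
  simp only [Z_ch2]
  have := Z_nonneg h (k+1, 0)
  linarith

lemma Lv_comb (A B C : ℕ × ℕ → ℕ × ℕ → ℝ) (k : ℕ) :
    Lv (fun j m => A j m + (B j m + C j m) / 2) k = Lv A k + (Lv B k + Lv C k) / 2 := by
  unfold Lv Z
  simp only [Finset.sum_add_distrib, ← Finset.sum_div]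

lemma Lv_psi_le {N : ℕ} (p : Fin N → ℝ × ℝ) (k : ℕ) : Lv (psi p) k ≤ Lv (CC p) k + Lv (CP p) (k+1) := by
  have e : Lv (psi p) k = Lv (CC p) k + (Lv (ch1 (CP p)) k + Lv (ch2 (CP p)) k) / 2 :=
    Lv_comb _ _ _ k
  have h1 := Lv_ch1 (CP_nonneg p) k
  have h2 := Lv_ch2 (CP_nonneg p) k
  linarith

lemma Lv_phi_le {N : ℕ} (p : Fin N → ℝ × ℝ) (k : ℕ) : Lv (phi p) k ≤ Lv (CC p) k + Lv (psi p) (k+1) := by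
  have e : Lv (phi p) k = Lv (CC p) k + (Lv (ch1 (psi p)) k + Lv (ch2 (psi p)) k) / 2 :=
    Lv_comb _ _ _ k
  have h1 := Lv_ch1 (psi_nonneg p) k
  have h2 := Lv_ch2 (psi_nonneg p) k
  linarith

lemma Lv_CC {N : ℕ} (p : Fin N → ℝ × ℝ) (k : ℕ) : Lv (CC p) k = Lv (CP p) k + Lv (CE p) k := by
  unfold Lv Z
  simp only [← Finset.sum_add_distrib, CP_add_CE]

lemma card_cells {j : ℕ × ℕ} {k : ℕ} (h : j.1 + j.2 = k) : ((cells j).card : ℝ) = 2 ^ k := by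
  subst h
  simp [cells, pow_add]

lemma sum_cnt_real {N : ℕ} {p : Fin N → ℝ × ℝ} (hp : ∀ i, p i ∈ unitSq) (j : ℕ × ℕ) :
    ∑ m ∈ cells j, (cnt p j m : ℝ) = N := by
  exact_mod_cast sum_cnt hp j

lemma Lv_ge {F : ℕ × ℕ → ℕ × ℕ → ℝ} {k : ℕ} {c : ℝ} (h : ∀ j : ℕ × ℕ, j.1 + j.2 = k → c ≤ Z F j) :
    ((k:ℝ) + 1) * c ≤ Lv F k := by
  unfold Lv
  have := Finset.card_nsmul_le_sum (Finset.HasAntidiagonal.antidiagonal k) (Z F) c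
    (fun j hj => h j (Finset.HasAntidiagonal.mem_antidiagonal.1 hj))
  rw [Finset.Nat.card_antidiagonal, nsmul_eq_mul] at this
  exact_mod_cast this

lemma Lv_CE_ge {N : ℕ} {p : Fin N → ℝ × ℝ} (hp : ∀ i, p i ∈ unitSq) (k : ℕ) :
    ((k:ℝ) + 1) * ((2 ^ k - N) * ee N k) ≤ Lv (CE p) k := by
  refine Lv_ge fun j hj => ?_
  have h : ∀ m ∈ cells j, (1 - (cnt p j m : ℝ)) * ee N k ≤ CE p j m := by
    intro m _
    unfold CE
    split_ifs with hc
    · rw [hc, CC_empty hc, hj]; simp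
    · have : (1:ℝ) ≤ cnt p j m := by exact_mod_cast Nat.one_le_iff_ne_zero.2 hc
      nlinarith [ee_nonneg N k]
  refine le_trans (le_of_eq ?_) (Finset.sum_le_sum h)
  rw [← Finset.sum_mul, Finset.sum_sub_distrib, sum_cnt_real hp]
  simp [card_cells hj]

lemma Lv_phi_ge {N : ℕ} {p : Fin N → ℝ × ℝ} (hp : ∀ i, p i ∈ unitSq) {k : ℕ} {g g' : ℝ}
    (hg : GamOK g ((N:ℝ) / 2 ^ k)) (hg' : GamOK g' ((N:ℝ) / 2 ^ (k+1))) :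
    ((k:ℝ) + 1) * ((2 ^ (k+1) - N) * (g / 2 ^ k) + (2 * N - 2 ^ (k+1)) * (g' / 2 ^ (k+1))
      + (2 ^ (k+1) - N) * ee N (k+1)) ≤ Lv (phi p) k := by
  refine Lv_ge fun j hj => ?_
  refine le_trans (le_of_eq ?_) (Finset.sum_le_sum fun m _ => phi_ge (p := p) (m := m) hj hg hg')
  rw [Finset.sum_add_distrib, Finset.sum_add_distrib, ← Finset.sum_mul, ← Finset.sum_mul,
    ← Finset.sum_mul, Finset.sum_sub_distrib, Finset.sum_sub_distrib, ← Finset.mul_sum, sum_cnt_real hp]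
  simp only [Finset.sum_const, nsmul_eq_mul, card_cells hj]
  rw [pow_succ]
  try ring

lemma bessel_levels {N : ℕ} {p : Fin N → ℝ × ℝ} (hp : ∀ i, p i ∈ unitSq) (L : ℕ) :
    ∑ k ∈ Finset.range L, Lv (CC p) k ≤ L2disc N p ^ 2 := by
  classical
  refine le_trans (le_of_eq ?_) (bessel_disc hp ((Finset.range L).biUnion fun k => Finset.HasAntidiagonal.antidiagonal k))
  rw [Finset.sum_biUnion]
  · rfl
  · intro a _ b _ hab
    simp only [Function.onFun]
    rw [Finset.disjoint_left]
    intro x hx hy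
    rw [Finset.HasAntidiagonal.mem_antidiagonal] at hx hy
    exact hab (hx.symm.trans hy)

lemma partial_bound {N M : ℕ} {p : Fin N → ℝ × ℝ} (hp : ∀ i, p i ∈ unitSq) {g g' : ℝ}
    (hg : GamOK g ((N:ℝ) / 2 ^ M)) (hg' : GamOK g' ((N:ℝ) / 2 ^ (M+1)))
    (hN : (N:ℝ) ≤ 2 ^ (M+1)) (L : ℕ) :
    ((M:ℝ) + 1) * ((2 ^ (M+1) - N) * (g / 2 ^ M) + (2 * N - 2 ^ (M+1)) * (g' / 2 ^ (M+1))
      + ∑ l ∈ Finset.range L, (2 ^ (M+1+l) - N) * ee N (M+1+l)) ≤ L2disc N p ^ 2 := by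
  have hterm : ∀ l : ℕ, 0 ≤ (2 ^ (M+1+l) - (N:ℝ)) * ee N (M+1+l) := by
    intro l
    refine mul_nonneg (sub_nonneg.2 (hN.trans ?_)) (ee_nonneg _ _)
    exact pow_le_pow_right₀ (by norm_num) (by omega)
  have hE : ∀ l : ℕ, ((M:ℝ) + 1) * ((2 ^ (M+1+l) - N) * ee N (M+1+l)) ≤ Lv (CE p) (M+1+l) := by
    intro l
    refine le_trans ?_ (Lv_CE_ge hp (M+1+l))
    refine mul_le_mul_of_nonneg_right ?_ (hterm l)
    push_cast
    have : (0:ℝ) ≤ l := by positivity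
    linarith
  have hCE : ∀ k, Lv (CE p) k ≤ Lv (CC p) k := fun k => by
    rw [Lv_CC]; linarith [Lv_nonneg (CP_nonneg p) k]
  have B := bessel_levels hp (M + (L + 3))
  rw [Finset.sum_range_add] at B
  have B0 : 0 ≤ ∑ k ∈ Finset.range M, Lv (CC p) k :=
    Finset.sum_nonneg fun k _ => Lv_nonneg (CC_nonneg p) k
  rw [Finset.sum_range_succ', Finset.sum_range_succ', Finset.sum_range_succ'] at B
  have hs : ∑ l ∈ Finset.range L, (2 ^ (M+1+l) - (N:ℝ)) * ee N (M+1+l)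
      ≤ ∑ l ∈ Finset.range (L+2), (2 ^ (M+1+l) - (N:ℝ)) * ee N (M+1+l) :=
    Finset.sum_le_sum_of_subset_of_nonneg (Finset.range_mono (by omega)) fun l _ _ => hterm l
  rw [Finset.sum_range_succ', Finset.sum_range_succ'] at hs
  have hR : ((M:ℝ) + 1) * ∑ l ∈ Finset.range L, (2 ^ (M+1+(l+1+1)) - (N:ℝ)) * ee N (M+1+(l+1+1))
      ≤ ∑ l ∈ Finset.range L, Lv (CC p) (M + (l+1+1+1)) := by
    rw [Finset.mul_sum]
    refine Finset.sum_le_sum fun l _ => ?_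
    have := (hE (l+1+1)).trans (hCE _)
    rw [show M + (l+1+1+1) = M + 1 + (l+1+1) by ring]
    exact this
  have h1 := Lv_phi_ge hp hg hg'
  have h2 := Lv_phi_le p M
  have h3 := Lv_psi_le p (M+1)
  have h4 := Lv_CC p (M+2)
  have h5 := hE 1
  simp only [Nat.add_zero, Nat.zero_add, add_zero, zero_add] at *
  rw [show M + (1 + 1) = M + 2 by ring] at B
  rw [show M + 1 + 1 = M + 2 by ring] at *
  have hM : (0:ℝ) ≤ (M:ℝ) + 1 := by positivity
  have h6 := mul_le_mul_of_nonneg_left hs hM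
  nlinarith

lemma ee_term {N M : ℕ} {q : ℝ} (hq : (N:ℝ) = q * 2 ^ M) (l : ℕ) :
    (2 ^ (M+1+l) - (N:ℝ)) * ee N (M+1+l) =
      q ^ 2 / 1024 * (1/4) ^ l - q ^ 3 / 2048 * (1/8) ^ l := by
  unfold ee
  rw [hq]
  have e4 : ((1:ℝ)/4) ^ l = 1 / (2 ^ l) ^ 2 := by
    rw [← pow_mul, mul_comm, pow_mul, one_div_pow]; norm_num
  have e8 : ((1:ℝ)/8) ^ l = 1 / (2 ^ l) ^ 3 := by
    rw [← pow_mul, mul_comm, pow_mul, one_div_pow]; norm_num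
  rw [e4, e8, pow_add, pow_add]
  field_simp
  ring

/-- If `P ⊂ [0,1)²` has `N = 2^{M+κ}` points with `M ∈ ℕ₀`, `0 ≤ κ < 1`, then
`‖D_P | L₂‖² ≥ (M+1)·Δ(κ)`. -/
theorem l2disc_sq_ge_Delta (M : ℕ) (κ : ℝ) (hκ0 : 0 ≤ κ) (hκ1 : κ < 1)
    (N : ℕ) (p : Fin N → ℝ × ℝ) (hp : ∀ i, p i ∈ unitSq)
    (hN : (N : ℝ) = 2 ^ ((M : ℝ) + κ)) :
    ((M : ℝ) + 1) * Delta κ ≤ L2disc N p ^ 2 := by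
  set q : ℝ := (2:ℝ) ^ κ with hqdef
  have hq : (N:ℝ) = q * 2 ^ M := by
    rw [hN, Real.rpow_add (by norm_num), Real.rpow_natCast, mul_comm]
  have hP : (0:ℝ) < 2 ^ M := by positivity
  have hq1 : 1 ≤ q := Real.one_le_rpow (by norm_num) hκ0
  have hq2 : q ≤ 2 := by
    have := Real.rpow_le_rpow_of_exponent_le (by norm_num : (1:ℝ) ≤ 2) hκ1.le
    rwa [Real.rpow_one] at this
  have el : (N:ℝ) / 2 ^ M = q := by rw [hq]; field_simp
  have el' : (N:ℝ) / 2 ^ (M+1) = 2 ^ (κ - 1) := by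
    rw [hq, Real.rpow_sub (by norm_num), Real.rpow_one, ← hqdef, pow_succ]; field_simp
  have hg : GamOK (gam κ) ((N:ℝ) / 2 ^ M) := by rw [el]; exact gamOK κ
  have hg' : GamOK (gam (κ - 1)) ((N:ℝ) / 2 ^ (M+1)) := by rw [el']; exact gamOK (κ - 1)
  have hN2 : (N:ℝ) ≤ 2 ^ (M+1) := by rw [hq, pow_succ]; nlinarith
  have key := partial_bound hp hg hg' hN2
  simp only [ee_term hq] at key
  have s4 : HasSum (fun l : ℕ => q ^ 2 / 1024 * ((1:ℝ)/4) ^ l) (q ^ 2 / 1024 * (1 - 1/4)⁻¹) :=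
    (hasSum_geometric_of_lt_one (by norm_num) (by norm_num)).mul_left _
  have s8 : HasSum (fun l : ℕ => q ^ 3 / 2048 * ((1:ℝ)/8) ^ l) (q ^ 3 / 2048 * (1 - 1/8)⁻¹) :=
    (hasSum_geometric_of_lt_one (by norm_num) (by norm_num)).mul_left _
  have lim := ((s4.sub s8).tendsto_sum_nat.const_add
    ((2 ^ (M+1) - (N:ℝ)) * (gam κ / 2 ^ M) + (2 * N - 2 ^ (M+1)) * (gam (κ-1) / 2 ^ (M+1)))).const_mul
      ((M:ℝ) + 1)
  refine le_trans (le_of_eq ?_) (le_of_tendsto' lim key)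
  congr 1
  unfold Delta
  have e2 : (2:ℝ) ^ (2 * κ - 8) = q ^ 2 / 256 := by
    rw [Real.rpow_sub (by norm_num), mul_comm, Real.rpow_mul (by norm_num), ← hqdef]; norm_num
  have e3 : (2:ℝ) ^ (3 * κ - 8) = q ^ 3 / 256 := by
    rw [Real.rpow_sub (by norm_num), mul_comm, Real.rpow_mul (by norm_num), ← hqdef]; norm_num
  rw [e2, e3, ← hqdef, hq, pow_succ]
  field_simp
  ring

end
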